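/- Let h : ℝ^n → ℝ be lower semicontinuous and (κ,γ)-strongly quasar-convex with κ ∈ (0,1] and γ > 0, with unique minimizer x̄ ∈ argmin_{ℝ^n} h, and suppose x̄ satisfies the quadratic-growth inequality h(x̄) + (κγ/(2(2−κ)))·‖y − x̄‖² ≤ h(y) for all y. Let {β_k} be a sequence with β_k ≥ β' > 0 for all k, and let {x^k} satisfy x^{k+1} ∈ Prox_{β_k h}(x^k) for all k ≥ 0. Then: (i) h(x^{k+1}) ≤ h(x^k) for all k; (ii) ‖x^{k+1} − x̄‖² ≤ ‖x^k − x̄‖² / (1 + κβ'γ + κ²β'γ/(2−κ)) for all k, hence ‖x^k − x̄‖ ≤ μ^k·‖x^0 − x̄‖ with μ := (1 + κβ'γ + κ²β'γ/(2−κ))^{−1/2} ∈ (0,1), so x^k converges linearly to x̄; and (iii) h(x^k) converges to min_{x∈ℝ^n} h(x). -/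

import Mathlib

open Set Filter Topology

/-- `h` is (κ,γ)-strongly quasar-convex (on all of the space) with respect to `x̄`. -/
def StronglyQuasarConvex {n : ℕ} (h : EuclideanSpace ℝ (Fin n) → ℝ) (κ γ : ℝ)
    (xbar : EuclideanSpace ℝ (Fin n)) : Prop :=
  ∀ x : EuclideanSpace ℝ (Fin n), ∀ l ∈ Icc (0:ℝ) 1,
    h (l • xbar + (1 - l) • x) ≤ κ * l * h xbar + (1 - κ * l) * h x
      - l * (1 - l / (2 - κ)) * (κ * γ / 2) * ‖x - xbar‖ ^ 2

/-- The proximity operator `Prox_{βh}(z)` of `h` on all of the space with parameter `β`. -/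
def Prox {n : ℕ} (β : ℝ) (h : EuclideanSpace ℝ (Fin n) → ℝ)
    (z : EuclideanSpace ℝ (Fin n)) : Set (EuclideanSpace ℝ (Fin n)) :=
  {x | ∀ y, h x + 1 / (2 * β) * ‖z - x‖ ^ 2 ≤ h y + 1 / (2 * β) * ‖z - y‖ ^ 2}

/-!
Comparing a proximal point `p` of `z` with the points `l • xbar + (1 - l) • p` as `l → 0` gives
`2 β κ (h p - h xbar) + ‖z - p‖² + (1 + κ β γ) ‖p - xbar‖² ≤ ‖z - xbar‖²`.
Bounding the gap `h p - h xbar` from below by quadratic growth, which is strong quasar-convexity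
along the same segments as `l → 1`, turns this into a contraction towards `xbar`; dropping the
distance terms on the left instead bounds the gap by the distance of the previous iterate.
-/

theorem one_div_sqrt_mem_Ioo {c : ℝ} (hc : 1 < c) : 1 / √c ∈ Ioo (0 : ℝ) 1 := by
  have one_lt_sqrt : 1 < √c := Real.lt_sqrt_of_sq_lt (by simpa using hc)
  have sqrt_pos : 0 < √c := one_pos.trans one_lt_sqrt
  exact ⟨one_div_pos.2 sqrt_pos, (div_lt_one sqrt_pos).2 one_lt_sqrt⟩

theorem le_geom_of_sq_le_div {a : ℕ → ℝ} {c : ℝ} (ha : ∀ k, 0 ≤ a k)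
    (hstep : ∀ k, a (k + 1) ^ 2 ≤ a k ^ 2 / c) (k : ℕ) : a k ≤ (1 / √c) ^ k * a 0 := by
  refine le_geom (by positivity) k fun j _ => ?_
  calc a (j + 1) ≤ √(a j ^ 2 / c) := Real.le_sqrt_of_sq_le (hstep j)
    _ = a j / √c := by rw [Real.sqrt_div (sq_nonneg _), Real.sqrt_sq (ha j)]
    _ = 1 / √c * a j := by ring

/-- The reciprocal of the factor by which a proximal step of size `β` contracts the squared
distance to the minimizer of a `(κ, γ)`-strongly quasar-convex function; the last summand comes
from quadratic growth. -/
noncomputable def proxRate (κ γ β : ℝ) : ℝ :=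
  1 + κ * β * γ + κ ^ 2 * β * γ / (2 - κ)

theorem one_lt_proxRate {κ γ β : ℝ} (hκ : κ ∈ Ioc (0 : ℝ) 1) (hγ : 0 < γ) (hβ : 0 < β) :
    1 < proxRate κ γ β := by
  obtain ⟨κ_pos, κ_le_one⟩ := hκ
  have two_sub_pos : 0 < 2 - κ := by linarith
  rw [proxRate, add_assoc]
  exact lt_add_of_pos_right 1 (by positivity)

theorem monotone_proxRate {κ γ : ℝ} (hκ : κ ∈ Ioc (0 : ℝ) 1) (hγ : 0 ≤ γ) :
    Monotone (proxRate κ γ) := by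
  obtain ⟨κ_pos, κ_le_one⟩ := hκ
  have two_sub_pos : 0 < 2 - κ := by linarith
  intro β₁ β₂ hβ
  unfold proxRate
  gcongr

section NormedSpace

variable {E : Type*} [SeminormedAddCommGroup E]

/-- Strong quasar-convexity with respect to `xbar`, as in `StronglyQuasarConvex`, for functions on
an arbitrary normed space. -/
def StronglyQuasarConvexAt [NormedSpace ℝ E] (h : E → ℝ) (κ γ : ℝ) (xbar : E) : Prop :=
  ∀ x : E, ∀ l ∈ Icc (0 : ℝ) 1,
    h (l • xbar + (1 - l) • x) ≤ κ * l * h xbar + (1 - κ * l) * h x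
      - l * (1 - l / (2 - κ)) * (κ * γ / 2) * ‖x - xbar‖ ^ 2

/-- `p` is a proximal point of `z`: a value of the (possibly multivalued) proximity operator `Prox`,
on an arbitrary normed group. -/
def IsProxPoint (β : ℝ) (h : E → ℝ) (z p : E) : Prop :=
  ∀ y, h p + 1 / (2 * β) * ‖z - p‖ ^ 2 ≤ h y + 1 / (2 * β) * ‖z - y‖ ^ 2

variable {h : E → ℝ} {κ γ β : ℝ} {xbar z p : E}

theorem IsProxPoint.apply_le (hp : IsProxPoint β h z p) (hβ : 0 ≤ β) : h p ≤ h z :=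
  calc h p ≤ h p + 1 / (2 * β) * ‖z - p‖ ^ 2 := le_add_of_nonneg_right (by positivity)
    _ ≤ h z + 1 / (2 * β) * ‖z - z‖ ^ 2 := hp z
    _ = h z := by simp

theorem StronglyQuasarConvexAt.quadratic_growth [NormedSpace ℝ E]
    (hq : StronglyQuasarConvexAt h κ γ xbar) (hκ : κ ∈ Ioc (0 : ℝ) 1) (hγ : 0 ≤ γ)
    (hmin : ∀ y, h xbar ≤ h y) (y : E) :
    h xbar + κ * γ / (2 * (2 - κ)) * ‖y - xbar‖ ^ 2 ≤ h y := by
  obtain ⟨κ_pos, κ_le_one⟩ := hκ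
  have two_sub_pos : 0 < 2 - κ := by linarith
  set G := κ * γ / (2 * (2 - κ)) * ‖y - xbar‖ ^ 2 with hG
  have G_nonneg : 0 ≤ G := by positivity
  have growth_of_lt_one : ∀ l ∈ Ioo (0 : ℝ) 1, h xbar + l * G ≤ h y := by
    rintro l ⟨l_pos, l_lt_one⟩
    have coeff_pos : 0 < 1 - κ * l :=
      sub_pos.2 (mul_lt_one_of_nonneg_of_lt_one_right κ_le_one l_pos.le l_lt_one)
    have coeff_le : 1 - κ * l ≤ 2 - κ - l := by
      linarith [mul_nonneg (sub_nonneg.2 κ_le_one) (sub_nonneg.2 l_lt_one.le)]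
    have modulus_eq : l * (1 - l / (2 - κ)) * (κ * γ / 2) * ‖y - xbar‖ ^ 2
        = (2 - κ - l) * (l * G) := by
      rw [hG]
      field_simp
    have segment : (2 - κ - l) * (l * G) ≤ (1 - κ * l) * (h y - h xbar) := by
      have := (hmin _).trans (hq y l ⟨l_pos.le, l_lt_one.le⟩)
      linarith
    have scaled : (1 - κ * l) * (l * G) ≤ (1 - κ * l) * (h y - h xbar) :=
      (mul_le_mul_of_nonneg_right coeff_le (mul_nonneg l_pos.le G_nonneg)).trans segment
    linarith [le_of_mul_le_mul_left scaled coeff_pos]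
  have one_mem : (1 : ℝ) ∈ closure (Ioo (0 : ℝ) 1) := by simp [closure_Ioo]
  simpa using le_on_closure growth_of_lt_one (by fun_prop) continuousOn_const one_mem

end NormedSpace

section InnerProductSpace

variable {E : Type*} [SeminormedAddCommGroup E] [InnerProductSpace ℝ E]

theorem norm_sub_convex_combination_sq (x y z : E) (l : ℝ) :
    ‖z - (l • x + (1 - l) • y)‖ ^ 2
      = l * ‖z - x‖ ^ 2 + (1 - l) * ‖z - y‖ ^ 2 - l * (1 - l) * ‖y - x‖ ^ 2 := by
  have combination : z - (l • x + (1 - l) • y) = l • (z - x) + (1 - l) • (z - y) := by module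
  have difference : y - x = (z - x) - (z - y) := by abel
  rw [combination, difference, norm_add_sq_real, norm_sub_sq_real (z - x), norm_smul, norm_smul,
    real_inner_smul_left, real_inner_smul_right, mul_pow, mul_pow, Real.norm_eq_abs,
    Real.norm_eq_abs, sq_abs, sq_abs]
  ring

variable {h : E → ℝ} {κ γ β : ℝ} {xbar z p : E}

theorem IsProxPoint.three_point_inequality (hp : IsProxPoint β h z p)
    (hq : StronglyQuasarConvexAt h κ γ xbar) (hβ : 0 < β) :
    2 * β * κ * (h p - h xbar) + ‖z - p‖ ^ 2 + (1 + κ * β * γ) * ‖p - xbar‖ ^ 2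
      ≤ ‖z - xbar‖ ^ 2 := by
  have three_point_of_pos : ∀ l ∈ Ioo (0 : ℝ) 1,
      2 * β * κ * (h p - h xbar) + ‖z - p‖ ^ 2
        + (1 - l + (1 - l / (2 - κ)) * (κ * β * γ)) * ‖p - xbar‖ ^ 2 ≤ ‖z - xbar‖ ^ 2 := by
    rintro l ⟨l_pos, l_lt_one⟩
    have prox_le := hp (l • xbar + (1 - l) • p)
    rw [norm_sub_convex_combination_sq] at prox_le
    have segment := hq p l ⟨l_pos.le, l_lt_one.le⟩
    have cleared : 2 * β * h p + ‖z - p‖ ^ 2 ≤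
        2 * β * (κ * l * h xbar + (1 - κ * l) * h p
          - l * (1 - l / (2 - κ)) * (κ * γ / 2) * ‖p - xbar‖ ^ 2)
        + (l * ‖z - xbar‖ ^ 2 + (1 - l) * ‖z - p‖ ^ 2 - l * (1 - l) * ‖p - xbar‖ ^ 2) := by
      have scaled := mul_le_mul_of_nonneg_left
        (prox_le.trans (add_le_add_left segment _)) (by positivity : 0 ≤ 2 * β)
      simpa only [mul_add (2 * β), ← mul_assoc (2 * β) (1 / (2 * β)),
        mul_one_div_cancel (by positivity : 2 * β ≠ 0), one_mul] using scaled
    refine le_of_mul_le_mul_left ?_ l_pos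
    linarith
  have zero_mem : (0 : ℝ) ∈ closure (Ioo (0 : ℝ) 1) := by simp [closure_Ioo]
  simpa using le_on_closure three_point_of_pos (by fun_prop) continuousOn_const zero_mem

theorem IsProxPoint.apply_sub_le_div (hp : IsProxPoint β h z p)
    (hq : StronglyQuasarConvexAt h κ γ xbar) (hκ : 0 < κ) (hγ : 0 ≤ γ) (hβ : 0 < β) :
    h p - h xbar ≤ ‖z - xbar‖ ^ 2 / (2 * β * κ) := by
  have prox_dist_nonneg : 0 ≤ ‖z - p‖ ^ 2 + (1 + κ * β * γ) * ‖p - xbar‖ ^ 2 := by positivity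
  rw [le_div_iff₀' (by positivity)]
  linarith [hp.three_point_inequality hq hβ]

theorem IsProxPoint.proxRate_mul_sq_norm_sub_le (hp : IsProxPoint β h z p)
    (hq : StronglyQuasarConvexAt h κ γ xbar) (hκ : κ ∈ Ioc (0 : ℝ) 1) (hγ : 0 ≤ γ)
    (hmin : ∀ y, h xbar ≤ h y) (hβ : 0 < β) :
    proxRate κ γ β * ‖p - xbar‖ ^ 2 ≤ ‖z - xbar‖ ^ 2 := by
  have κ_pos : 0 < κ := hκ.1
  have two_sub_ne_zero : 2 - κ ≠ 0 := by linarith [hκ.2]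
  have growth : κ * γ / (2 * (2 - κ)) * ‖p - xbar‖ ^ 2 ≤ h p - h xbar :=
    le_sub_iff_add_le'.2 (hq.quadratic_growth hκ hγ hmin p)
  calc proxRate κ γ β * ‖p - xbar‖ ^ 2
      = 2 * β * κ * (κ * γ / (2 * (2 - κ)) * ‖p - xbar‖ ^ 2)
          + (1 + κ * β * γ) * ‖p - xbar‖ ^ 2 := by
        rw [proxRate]
        field_simp
        ring
    _ ≤ 2 * β * κ * (h p - h xbar) + (1 + κ * β * γ) * ‖p - xbar‖ ^ 2 := by gcongr
    _ ≤ ‖z - xbar‖ ^ 2 := by linarith [hp.three_point_inequality hq hβ, sq_nonneg ‖z - p‖]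

theorem IsProxPoint.sq_norm_sub_le_div_proxRate (hp : IsProxPoint β h z p)
    (hq : StronglyQuasarConvexAt h κ γ xbar) (hκ : κ ∈ Ioc (0 : ℝ) 1) (hγ : 0 < γ)
    (hmin : ∀ y, h xbar ≤ h y) {β' : ℝ} (hβ' : 0 < β') (hβ : β' ≤ β) :
    ‖p - xbar‖ ^ 2 ≤ ‖z - xbar‖ ^ 2 / proxRate κ γ β' := by
  rw [le_div_iff₀' (one_pos.trans (one_lt_proxRate hκ hγ hβ'))]
  calc proxRate κ γ β' * ‖p - xbar‖ ^ 2
      ≤ proxRate κ γ β * ‖p - xbar‖ ^ 2 := by gcongr; exact monotone_proxRate hκ hγ.le hβ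
    _ ≤ ‖z - xbar‖ ^ 2 :=
      hp.proxRate_mul_sq_norm_sub_le hq hκ hγ.le hmin (hβ'.trans_le hβ)

theorem tendsto_apply_of_isProxPoint {β : ℕ → ℝ} {β' : ℝ} {x : ℕ → E}
    (hq : StronglyQuasarConvexAt h κ γ xbar) (hκ : 0 < κ) (hγ : 0 ≤ γ)
    (hmin : ∀ y, h xbar ≤ h y) (hβ' : 0 < β') (hβ : ∀ k, β' ≤ β k)
    (hiter : ∀ k, IsProxPoint (β k) h (x k) (x (k + 1))) (hx : Tendsto x atTop (𝓝 xbar)) :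
    Tendsto (fun k => h (x k)) atTop (𝓝 (h xbar)) := by
  have gap_le (k : ℕ) : h (x (k + 1)) ≤ h xbar + ‖x k - xbar‖ ^ 2 / (2 * β' * κ) := by
    have β_pos : 0 < β k := hβ'.trans_le (hβ k)
    calc h (x (k + 1)) ≤ h xbar + ‖x k - xbar‖ ^ 2 / (2 * β k * κ) :=
          sub_le_iff_le_add'.1 ((hiter k).apply_sub_le_div hq hκ hγ β_pos)
      _ ≤ h xbar + ‖x k - xbar‖ ^ 2 / (2 * β' * κ) := by gcongr; exact hβ k
  have bound_tendsto : Tendsto (fun k => h xbar + ‖x k - xbar‖ ^ 2 / (2 * β' * κ)) atTop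
      (𝓝 (h xbar)) := by
    simpa using
      (((tendsto_iff_norm_sub_tendsto_zero.1 hx).pow 2).div_const (2 * β' * κ)).const_add (h xbar)
  rw [← tendsto_add_atTop_iff_nat 1]
  exact tendsto_of_tendsto_of_tendsto_of_le_of_le tendsto_const_nhds bound_tendsto
    (fun _ => hmin _) gap_le

theorem stmt_17_general {β : ℕ → ℝ} {β' : ℝ} {x : ℕ → E} (hκ : κ ∈ Ioc (0 : ℝ) 1) (hγ : 0 < γ)
    (hmin : ∀ y, h xbar ≤ h y) (hq : StronglyQuasarConvexAt h κ γ xbar)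
    (hβ' : 0 < β') (hβ : ∀ k, β' ≤ β k)
    (hiter : ∀ k, IsProxPoint (β k) h (x k) (x (k + 1))) :
    (∀ k, h (x (k + 1)) ≤ h (x k)) ∧
    (∀ k, ‖x (k + 1) - xbar‖ ^ 2 ≤ ‖x k - xbar‖ ^ 2 / proxRate κ γ β') ∧
    (1 / √(proxRate κ γ β') ∈ Ioo (0 : ℝ) 1 ∧
      ∀ k, ‖x k - xbar‖ ≤ (1 / √(proxRate κ γ β')) ^ k * ‖x 0 - xbar‖) ∧
    Tendsto x atTop (𝓝 xbar) ∧
    Tendsto (fun k => h (x k)) atTop (𝓝 (h xbar)) := by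
  have descent (k : ℕ) : h (x (k + 1)) ≤ h (x k) := (hiter k).apply_le (hβ'.le.trans (hβ k))
  have contraction (k : ℕ) := (hiter k).sq_norm_sub_le_div_proxRate hq hκ hγ hmin hβ' (hβ k)
  have ratio_mem := one_div_sqrt_mem_Ioo (one_lt_proxRate hκ hγ hβ')
  have linear_rate := le_geom_of_sq_le_div (fun k => norm_nonneg (x k - xbar)) contraction
  have x_tendsto : Tendsto x atTop (𝓝 xbar) := by
    rw [tendsto_iff_norm_sub_tendsto_zero]
    refine squeeze_zero (fun _ => norm_nonneg _) linear_rate ?_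
    simpa using
      (tendsto_pow_atTop_nhds_zero_of_lt_one ratio_mem.1.le ratio_mem.2).mul_const ‖x 0 - xbar‖
  exact ⟨descent, contraction, ⟨ratio_mem, linear_rate⟩, x_tendsto,
    tendsto_apply_of_isProxPoint hq hκ.1 hγ.le hmin hβ' hβ hiter x_tendsto⟩

end InnerProductSpace

theorem stmt_17 {n : ℕ} (h : EuclideanSpace ℝ (Fin n) → ℝ)
    (hlsc : LowerSemicontinuous h)
    (κ γ : ℝ) (hκ : κ ∈ Ioc (0:ℝ) 1) (hγ : 0 < γ)
    (xbar : EuclideanSpace ℝ (Fin n)) (hxbar : ∀ y, h xbar ≤ h y)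
    (huniq : ∀ y, (∀ z, h y ≤ h z) → y = xbar)
    (hq : StronglyQuasarConvex h κ γ xbar)
    (hgrowth : ∀ y, h xbar + κ * γ / (2 * (2 - κ)) * ‖y - xbar‖ ^ 2 ≤ h y)
    (β : ℕ → ℝ) (β' : ℝ) (hβ' : 0 < β') (hβ : ∀ k, β' ≤ β k)
    (x : ℕ → EuclideanSpace ℝ (Fin n))
    (hiter : ∀ k : ℕ, x (k + 1) ∈ Prox (β k) h (x k)) :
    (∀ k : ℕ, h (x (k + 1)) ≤ h (x k)) ∧
    (∀ k : ℕ, ‖x (k + 1) - xbar‖ ^ 2 ≤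
        ‖x k - xbar‖ ^ 2 / (1 + κ * β' * γ + κ ^ 2 * β' * γ / (2 - κ))) ∧
    (1 / Real.sqrt (1 + κ * β' * γ + κ ^ 2 * β' * γ / (2 - κ)) ∈ Ioo (0:ℝ) 1 ∧
      ∀ k : ℕ, ‖x k - xbar‖ ≤
        (1 / Real.sqrt (1 + κ * β' * γ + κ ^ 2 * β' * γ / (2 - κ))) ^ k * ‖x 0 - xbar‖) ∧
    Tendsto x atTop (𝓝 xbar) ∧
    Tendsto (fun k => h (x k)) atTop (𝓝 (h xbar)) := by
  exact stmt_17_general hκ hγ hxbar hq hβ' hβ hiter
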